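/- arXiv:2103.15947 — 2 statements merged into one kernel-verified Lean document; each statement's English description precedes it below -/
import Mathlib

section
/- Suppose F : X → ℝ is L_W-smooth, the FLT iterates satisfy W^t − W^{t−1} = −η Ā ∇F(W^{t−1}) for all t ≥ 1 with step size η > 0, and for a fixed t ≥ 1 the per-step gradient-deviation bound ‖(I_M − Ā)·∇F(W^{t−1})‖ ≤ L_W · a · ‖W^t − W^{t−1}‖ holds, where a is the operator norm of the linear map V ↦ (I_M − Ā)V on X. Then F(W^t) − F(W^{t−1}) ≤ −(1/(2η) − L_W/2 − (η/2)·L_W²·a²)·‖W^t − W^{t−1}‖². (Equation (25) of the paper's convergence proof.) -/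
open scoped RealInnerProductSpace

/-- Left multiplication by an `M × M` matrix `A` on the space of `M × d` real matrices,
realized as the Euclidean space `EuclideanSpace ℝ (Fin M × Fin d)` (with the Frobenius
inner product), via the Kronecker product `A ⊗ I_d`. -/
noncomputable def matLeftMul (M d : ℕ) (A : Matrix (Fin M) (Fin M) ℝ) :
    EuclideanSpace ℝ (Fin M × Fin d) →L[ℝ] EuclideanSpace ℝ (Fin M × Fin d) :=
  LinearMap.toContinuousLinearMap
    (Matrix.toEuclideanLin (Matrix.kroneckerMap (· * ·) A (1 : Matrix (Fin d) (Fin d) ℝ)))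

theorem descent_aux {E : Type*} [NormedAddCommGroup E] [InnerProductSpace ℝ E] [CompleteSpace E]
    (F : E → ℝ) (G : E → E) (hF : ∀ V, HasGradientAt F (G V) V) (L : ℝ)
    (hs : ∀ U V : E, ‖G U - G V‖ ≤ L * ‖U - V‖) (x D : E) :
    F (x + D) - F x ≤ inner ℝ (G x) D + L / 2 * ‖D‖ ^ 2 := by
  have hd : ∀ s : ℝ, HasDerivAt
      (fun s : ℝ => F (x + s • D) - s * inner ℝ (G x) D - s ^ 2 * (L / 2 * ‖D‖ ^ 2))
      (inner ℝ (G (x + s • D)) D - inner ℝ (G x) D - 2 * s * (L / 2 * ‖D‖ ^ 2)) s := by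
    intro s
    have h1 : HasDerivAt (fun s : ℝ => x + s • D) D s := by
      simpa using ((hasDerivAt_id s).smul_const D).const_add x
    have h2 : HasDerivAt (fun s : ℝ => F (x + s • D)) (inner ℝ (G (x + s • D)) D) s := by
      have := (hF (x + s • D)).hasFDerivAt.comp_hasDerivAt s h1
      rw [InnerProductSpace.toDual_apply_apply] at this
      exact this
    have h3 : HasDerivAt (fun s : ℝ => s * inner ℝ (G x) D) (inner ℝ (G x) D) s := by
      simpa using (hasDerivAt_id s).mul_const (inner ℝ (G x) D)
    have h4 : HasDerivAt (fun s : ℝ => s ^ 2 * (L / 2 * ‖D‖ ^ 2))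
        (2 * s * (L / 2 * ‖D‖ ^ 2)) s := by
      simpa using (hasDerivAt_pow 2 s).mul_const (L / 2 * ‖D‖ ^ 2)
    exact (h2.sub h3).sub h4
  have hanti := antitoneOn_of_deriv_nonpos (convex_Icc (0 : ℝ) 1)
    (fun s _ => (hd s).continuousAt.continuousWithinAt)
    (fun s _ => (hd s).differentiableAt.differentiableWithinAt)
    (fun s hs' => by
      rw [interior_Icc] at hs'
      rw [(hd s).deriv, ← inner_sub_left]
      have h1 := real_inner_le_norm (G (x + s • D) - G x) D
      have h2 := hs (x + s • D) x
      rw [add_sub_cancel_left, norm_smul, Real.norm_of_nonneg hs'.1.le] at h2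
      have h3 := mul_le_mul_of_nonneg_right h2 (norm_nonneg D)
      nlinarith)
  have := hanti (Set.left_mem_Icc.2 zero_le_one) (Set.right_mem_Icc.2 zero_le_one) zero_le_one
  simp at this
  linarith

/-- Equation (25) of the paper's convergence proof. -/
theorem flt_eq25 (M d : ℕ) (hM : 1 ≤ M) (hd : 1 ≤ d)
    (Abar : Matrix (Fin M) (Fin M) ℝ)
    (F : EuclideanSpace ℝ (Fin M × Fin d) → ℝ)
    (gradF : EuclideanSpace ℝ (Fin M × Fin d) → EuclideanSpace ℝ (Fin M × Fin d))
    (hF : ∀ V, HasGradientAt F (gradF V) V)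
    (LW : ℝ)
    (hsmooth : ∀ U V : EuclideanSpace ℝ (Fin M × Fin d),
      ‖gradF U - gradF V‖ ≤ LW * ‖U - V‖)
    (η : ℝ) (hη : 0 < η)
    (W : ℕ → EuclideanSpace ℝ (Fin M × Fin d))
    (hupd : ∀ s : ℕ, 1 ≤ s →
      W s - W (s - 1) = -(η • matLeftMul M d Abar (gradF (W (s - 1)))))
    (a : ℝ) (ha : a = ‖matLeftMul M d ((1 : Matrix (Fin M) (Fin M) ℝ) - Abar)‖)
    (t : ℕ) (ht : 1 ≤ t)
    (hdev : ‖matLeftMul M d ((1 : Matrix (Fin M) (Fin M) ℝ) - Abar) (gradF (W (t - 1)))‖ ≤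
      LW * a * ‖W t - W (t - 1)‖) :
    F (W t) - F (W (t - 1)) ≤
      -(1 / (2 * η) - LW / 2 - (η / 2) * LW ^ 2 * a ^ 2) * ‖W t - W (t - 1)‖ ^ 2 := by
  have hU := hupd t ht
  set x := W (t - 1) with hx
  set D := W t - x with hD
  have hW : W t = x + D := by rw [hD]; abel
  have hdesc := descent_aux F gradF hF LW hsmooth x D
  rw [hW]
  have hE : matLeftMul M d ((1 : Matrix (Fin M) (Fin M) ℝ) - Abar) (gradF x)
      = gradF x - matLeftMul M d Abar (gradF x) := by
    have hk : Matrix.kroneckerMap (· * ·) ((1 : Matrix (Fin M) (Fin M) ℝ) - Abar)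
        (1 : Matrix (Fin d) (Fin d) ℝ) = 1 - Matrix.kroneckerMap (· * ·) Abar
        (1 : Matrix (Fin d) (Fin d) ℝ) := by
      rw [← Matrix.one_kronecker_one (α := ℝ) (m := Fin M) (n := Fin d)]
      ext i j
      simp only [Matrix.kroneckerMap_apply, Matrix.sub_apply, sub_mul]
    unfold matLeftMul
    rw [hk, map_sub]
    simp [Matrix.toEuclideanLin]
  rw [hE] at hdev
  set P := matLeftMul M d Abar (gradF x) with hP
  have hnD : ‖D‖ ^ 2 = η ^ 2 * ‖P‖ ^ 2 := by
    rw [hU, norm_neg, norm_smul, mul_pow, Real.norm_of_nonneg hη.le]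
  have hsq : ‖gradF x - P‖ ^ 2 ≤ (LW * a * ‖D‖) ^ 2 :=
    pow_le_pow_left₀ (norm_nonneg _) hdev 2
  have hexp : ‖gradF x - P + P‖ ^ 2 = ‖gradF x - P‖ ^ 2 + 2 * inner ℝ (gradF x - P) P + ‖P‖ ^ 2 :=
    norm_add_sq_real _ _
  have hin : inner ℝ (gradF x - P) P = inner ℝ (gradF x) P - ‖P‖ ^ 2 := by
    rw [inner_sub_left, real_inner_self_eq_norm_sq]
  have hGD : inner ℝ (gradF x) D = -(η * inner ℝ (gradF x) P) := by
    rw [hU, inner_neg_right, inner_smul_right]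
  have h1 : 1 / (2 * η) * ‖D‖ ^ 2 = η / 2 * ‖P‖ ^ 2 := by
    rw [hnD]; field_simp
  have h0 : 0 ≤ η / 2 * ‖gradF x - P + P‖ ^ 2 := by positivity
  have h2 : η / 2 * ‖gradF x - P‖ ^ 2 ≤ η / 2 * (LW * a * ‖D‖) ^ 2 :=
    mul_le_mul_of_nonneg_left hsq (by positivity)
  have h3 : -(η * inner ℝ (gradF x) P) ≤ η / 2 * ‖gradF x - P‖ ^ 2 - η / 2 * ‖P‖ ^ 2 := by
    rw [hexp, hin] at h0
    linarith
  have h4 : -(1 / (2 * η) - LW / 2 - (η / 2) * LW ^ 2 * a ^ 2) * ‖D‖ ^ 2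
      = -(1 / (2 * η) * ‖D‖ ^ 2) + LW / 2 * ‖D‖ ^ 2 + η / 2 * (LW * a * ‖D‖) ^ 2 := by ring
  rw [h4, h1]
  linarith
end

section
/- Suppose F : X → ℝ is L_W-smooth; the E-epoch FLT iterates (W^t)_{t=0}^{T} in X satisfy W^t − W^{t−1} = −η Ā ∇F(W^{t−1}) for all 1 ≤ t ≤ T with step size η > 0, together with the per-step gradient-deviation bound ‖(I_M − Ā)·∇F(W^{t−1})‖ ≤ L_W · a · ‖W^t − W^{t−1}‖ for all 1 ≤ t ≤ T, where a is the operator norm of V ↦ (I_M − Ā)V on X, and c := 1/(2η) − L_W/2 − (η/2)·L_W²·a² > 0. Suppose further there exist real numbers F₀*, F_T* and B₁, B₂ ≥ 0 (the local gradient-descent bounds over E local epochs, with B₁ = ‖W^{1,0} − W^{1,*}‖² and B₂ = ‖W^{T,0} − W^{T,*}‖²) such that 0 ≤ F(W^0) − F₀* ≤ B₁/(2ηE) and 0 ≤ F(W^T) − F_T* ≤ B₂/(2ηE) for a real E > 0. Then (1/(T·M)) · Σ_{t=1}^{T} ‖W^t − W^{t−1}‖² ≤ (B₁ + B₂ + 2ηE·(F₀*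 − F_T*)) / (2ηE · T · M · c). (Equation (9) of Appendix B.2: the elaborate convergence bound on the optimality gap of FLT incorporating the number of local epochs E.) -/
open scoped RealInnerProductSpace

theorem flt_descent {X : Type*} [NormedAddCommGroup X] [InnerProductSpace ℝ X] [CompleteSpace X]
    (F : X → ℝ) (g : X → X) (hF : ∀ V, HasGradientAt F (g V) V) (L : ℝ)
    (hs : ∀ U V : X, ‖g U - g V‖ ≤ L * ‖U - V‖) (U s : X) :
    F (U + s) ≤ F U + inner ℝ (g U) s + L / 2 * ‖s‖ ^ 2 := by
  have hd : ∀ t : ℝ, HasDerivAt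
      (fun t : ℝ => F (U + t • s) - t * inner ℝ (g U) s - L / 2 * ‖s‖ ^ 2 * t ^ 2)
      (inner ℝ (g (U + t • s)) s - inner ℝ (g U) s - L * ‖s‖ ^ 2 * t) t := by
    intro t
    have h1 : HasDerivAt (fun t : ℝ => U + t • s) s t := by
      simpa using ((hasDerivAt_id t).smul_const s).const_add U
    have h2 := (hF (U + t • s)).hasFDerivAt.comp_hasDerivAt t h1
    have h3 : HasDerivAt (fun t : ℝ => F (U + t • s)) (inner ℝ (g (U + t • s)) s) t := by
      simpa [Function.comp_def] using h2
    have h4 := (hasDerivAt_id t).mul_const (inner ℝ (g U) s)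
    have h5 := ((hasDerivAt_id t).pow 2).const_mul (L / 2 * ‖s‖ ^ 2)
    refine ((h3.sub h4).sub h5).congr_deriv ?_
    simp
    ring
  have hanti := antitoneOn_of_deriv_nonpos (convex_Icc (0 : ℝ) 1)
    (fun t _ => (hd t).continuousAt.continuousWithinAt)
    (fun t _ => (hd t).differentiableAt.differentiableWithinAt)
    (by
      intro t ht
      rw [interior_Icc] at ht
      rw [(hd t).deriv, ← inner_sub_left]
      have h1 := real_inner_le_norm (g (U + t • s) - g U) s
      have h2 := hs (U + t • s) U
      rw [add_sub_cancel_left, norm_smul, Real.norm_of_nonneg ht.1.le] at h2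
      have h3 := mul_le_mul_of_nonneg_right h2 (norm_nonneg s)
      nlinarith)
  have h := hanti (Set.left_mem_Icc.2 zero_le_one) (Set.right_mem_Icc.2 zero_le_one) zero_le_one
  simp at h
  linarith

theorem flt_split (M d : ℕ) (A : Matrix (Fin M) (Fin M) ℝ)
    (v : EuclideanSpace ℝ (Fin M × Fin d)) :
    matLeftMul M d (1 - A) v = v - matLeftMul M d A v := by
  have h : Matrix.kroneckerMap (· * ·) (1 - A) (1 : Matrix (Fin d) (Fin d) ℝ)
      = 1 - Matrix.kroneckerMap (· * ·) A (1 : Matrix (Fin d) (Fin d) ℝ) := by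
    ext i j
    obtain ⟨i1, i2⟩ := i
    obtain ⟨j1, j2⟩ := j
    simp only [Matrix.kroneckerMap_apply, Matrix.sub_apply, sub_mul, Matrix.one_apply, Prod.mk.injEq]
    by_cases h1 : i1 = j1 <;> by_cases h2 : i2 = j2 <;> simp [h1, h2]
  unfold matLeftMul
  rw [h]
  ext i
  simp [Matrix.toLpLin_apply, Matrix.sub_mulVec]

/-- Equation (9) of Appendix B.2: the elaborate convergence bound on the optimality gap
of FLT incorporating the number of local epochs `E`. -/
theorem flt_convergence_with_local_epochs (M d T : ℕ) (hM : 1 ≤ M) (hd : 1 ≤ d) (hT : 1 ≤ T)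
    (Abar : Matrix (Fin M) (Fin M) ℝ)
    (F : EuclideanSpace ℝ (Fin M × Fin d) → ℝ)
    (gradF : EuclideanSpace ℝ (Fin M × Fin d) → EuclideanSpace ℝ (Fin M × Fin d))
    (hF : ∀ V, HasGradientAt F (gradF V) V)
    (LW : ℝ)
    (hsmooth : ∀ U V : EuclideanSpace ℝ (Fin M × Fin d),
      ‖gradF U - gradF V‖ ≤ LW * ‖U - V‖)
    (η : ℝ) (hη : 0 < η)
    (W : ℕ → EuclideanSpace ℝ (Fin M × Fin d))
    (hupd : ∀ t : ℕ, 1 ≤ t → t ≤ T →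
      W t - W (t - 1) = -(η • matLeftMul M d Abar (gradF (W (t - 1)))))
    (a : ℝ) (ha : a = ‖matLeftMul M d ((1 : Matrix (Fin M) (Fin M) ℝ) - Abar)‖)
    (hdev : ∀ t : ℕ, 1 ≤ t → t ≤ T →
      ‖matLeftMul M d ((1 : Matrix (Fin M) (Fin M) ℝ) - Abar) (gradF (W (t - 1)))‖ ≤
        LW * a * ‖W t - W (t - 1)‖)
    (c : ℝ) (hc : c = 1 / (2 * η) - LW / 2 - (η / 2) * LW ^ 2 * a ^ 2)
    (hcpos : 0 < c)
    (E : ℝ) (hE : 0 < E)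
    (F₀star FTstar B₁ B₂ : ℝ) (hB₁ : 0 ≤ B₁) (hB₂ : 0 ≤ B₂)
    (h₀ : 0 ≤ F (W 0) - F₀star) (h₀' : F (W 0) - F₀star ≤ B₁ / (2 * η * E))
    (hT' : 0 ≤ F (W T) - FTstar) (hT'' : F (W T) - FTstar ≤ B₂ / (2 * η * E)) :
    (1 / ((T : ℝ) * (M : ℝ))) * (∑ t ∈ Finset.Icc 1 T, ‖W t - W (t - 1)‖ ^ 2) ≤
      (B₁ + B₂ + 2 * η * E * (F₀star - FTstar)) /
        (2 * η * E * (T : ℝ) * (M : ℝ) * c) := by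
  have hstep : ∀ t : ℕ, 1 ≤ t → t ≤ T →
      F (W t) ≤ F (W (t - 1)) - c * ‖W t - W (t - 1)‖ ^ 2 := by
    intro t h1 h2
    have hu := hupd t h1 h2
    have hv := hdev t h1 h2
    have hsp := flt_split M d Abar (gradF (W (t - 1)))
    have hds := flt_descent F gradF hF LW hsmooth (W (t - 1)) (W t - W (t - 1))
    rw [add_sub_cancel] at hds
    generalize matLeftMul M d (1 - Abar) (gradF (W (t - 1))) = e at *
    generalize matLeftMul M d Abar (gradF (W (t - 1))) = p at *
    generalize W t - W (t - 1) = s at *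
    have hg : gradF (W (t - 1)) = e - (1 / η) • s := by
      rw [hu, hsp, smul_neg, smul_smul, one_div_mul_cancel hη.ne', one_smul]
      abel
    have hi : inner ℝ (gradF (W (t - 1))) s = inner ℝ e s - 1 / η * ‖s‖ ^ 2 := by
      rw [hg, inner_sub_left, real_inner_smul_left, real_inner_self_eq_norm_sq]
    have hes := real_inner_le_norm e s
    have hsq : ‖e‖ ^ 2 ≤ (LW * a * ‖s‖) ^ 2 := pow_le_pow_left₀ (norm_nonneg e) hv 2
    have hy : ‖e‖ * ‖s‖ ≤ η / 2 * ‖e‖ ^ 2 + 1 / (2 * η) * ‖s‖ ^ 2 := by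
      have : η / 2 * ‖e‖ ^ 2 + 1 / (2 * η) * ‖s‖ ^ 2 - ‖e‖ * ‖s‖
          = (η * ‖e‖ - ‖s‖) ^ 2 / (2 * η) := by
        field_simp
        ring
      have h0 : 0 ≤ (η * ‖e‖ - ‖s‖) ^ 2 / (2 * η) := by positivity
      linarith
    have hm := mul_le_mul_of_nonneg_left hsq (half_pos hη).le
    have hh : 1 / η * ‖s‖ ^ 2 = 2 * (1 / (2 * η) * ‖s‖ ^ 2) := by
      field_simp
    rw [hi] at hds
    rw [hc]
    linarith
  have hsum : ∀ n : ℕ, n ≤ T →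
      F (W n) ≤ F (W 0) - c * ∑ t ∈ Finset.Icc 1 n, ‖W t - W (t - 1)‖ ^ 2 := by
    intro n
    induction n with
    | zero => intro _; simp
    | succ k ih =>
      intro hk
      have h1 := ih (by omega)
      have h2 := hstep (k + 1) (by omega) hk
      rw [Finset.sum_Icc_succ_top (by omega)]
      rw [Nat.add_sub_cancel] at h2 ⊢
      linarith
  have hfin := hsum T le_rfl
  have hTp : (0 : ℝ) < T := by exact_mod_cast hT
  have hMp : (0 : ℝ) < M := by exact_mod_cast hM
  generalize (∑ t ∈ Finset.Icc 1 T, ‖W t - W (t - 1)‖ ^ 2) = S at *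
  rw [le_div_iff₀ (by positivity)] at h₀'
  have hkey : 2 * η * E * (c * S) ≤ B₁ + B₂ + 2 * η * E * (F₀star - FTstar) := by
    have : 2 * η * E * (c * S) ≤ 2 * η * E * (F (W 0) - FTstar) :=
      mul_le_mul_of_nonneg_left (by linarith) (by positivity)
    linarith
  rw [le_div_iff₀ (by positivity)]
  calc 1 / ((T : ℝ) * M) * S * (2 * η * E * T * M * c) = 2 * η * E * (c * S) := by
        field_simp
    _ ≤ _ := hkey
end
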